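/- For all real p > 0 and x > 0, e^{-√p · x} = ∫_0^∞ e^{-p η x²} · (1/(2√(π η³))) e^{-1/(4η)} dη. -/

import Mathlib

open Real MeasureTheory

lemma aux_img (b : ℝ) (hb : 0 < b) : (fun s : ℝ => s - b / s) '' Set.Ioi 0 = Set.univ := by
  ext u
  simp only [Set.mem_image, Set.mem_Ioi, Set.mem_univ, iff_true]
  have h1 : |u| < √(u ^ 2 + 4 * b) := by
    rw [← Real.sqrt_sq_eq_abs]
    exact Real.sqrt_lt_sqrt (sq_nonneg u) (by linarith)
  have h2 : 0 < u + √(u ^ 2 + 4 * b) := by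
    have := neg_abs_le u
    linarith
  refine ⟨(u + √(u ^ 2 + 4 * b)) / 2, by positivity, ?_⟩
  have h3 : √(u ^ 2 + 4 * b) ^ 2 = u ^ 2 + 4 * b := Real.sq_sqrt (by positivity)
  have h4 := h2.ne'
  generalize √(u ^ 2 + 4 * b) = r at *
  field_simp
  nlinarith

lemma aux_inj (b : ℝ) (hb : 0 < b) : Set.InjOn (fun s : ℝ => s - b / s) (Set.Ioi 0) := by
  apply StrictMonoOn.injOn
  intro s hs t ht hst
  have hs' : 0 < s := hs
  have : b / t < b / s := div_lt_div_of_pos_left hb hs' hst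
  simp only
  linarith

lemma aux_deriv (b : ℝ) (s : ℝ) (hs : s ∈ Set.Ioi (0:ℝ)) :
    HasDerivWithinAt (fun s : ℝ => s - b / s) (1 + b / s ^ 2) (Set.Ioi 0) s := by
  have hs' : s ≠ 0 := (Set.mem_Ioi.mp hs).ne'
  have := ((hasDerivAt_id s).sub ((hasDerivAt_inv hs').const_mul b)).hasDerivWithinAt
    (s := Set.Ioi 0)
  convert! this using 1
  field_simp
  ring

lemma aux_swap (b : ℝ) (hb : 0 < b) :
    ∫ s in Set.Ioi (0:ℝ), exp (-(s - b / s) ^ 2)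
      = ∫ s in Set.Ioi (0:ℝ), b / s ^ 2 * exp (-(s - b / s) ^ 2) := by
  have himg : (fun s : ℝ => b / s) '' Set.Ioi 0 = Set.Ioi 0 := by
    ext u
    simp only [Set.mem_image, Set.mem_Ioi]
    constructor
    · rintro ⟨s, hs, rfl⟩; positivity
    · intro hu
      exact ⟨b / u, by positivity, by field_simp⟩
  have hinj : Set.InjOn (fun s : ℝ => b / s) (Set.Ioi 0) := by
    intro s hs t ht h
    have hs' : 0 < s := hs
    have ht' : 0 < t := ht
    simp only at h
    field_simp at h
    exact h.symm
  have hd : ∀ s ∈ Set.Ioi (0:ℝ),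
      HasDerivWithinAt (fun s : ℝ => b / s) (-(b / s ^ 2)) (Set.Ioi 0) s := by
    intro s hs
    have hs' : s ≠ 0 := (Set.mem_Ioi.mp hs).ne'
    have := ((hasDerivAt_inv hs').const_mul b).hasDerivWithinAt (s := Set.Ioi 0)
    convert! this using 1
    field_simp
  have := integral_image_eq_integral_abs_deriv_smul measurableSet_Ioi hd hinj
    (fun s => exp (-(s - b / s) ^ 2))
  rw [himg] at this
  rw [this]
  refine setIntegral_congr_fun measurableSet_Ioi fun s hs => ?_
  have hs' : 0 < s := hs
  simp only [smul_eq_mul]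
  rw [abs_neg, abs_of_pos (by positivity)]
  congr 2
  field_simp
  ring

lemma aux_main (b : ℝ) (hb : 0 < b) :
    ∫ s in Set.Ioi (0:ℝ), exp (-(s - b / s) ^ 2) = √π / 2 := by
  have hgi : Integrable (fun u : ℝ => exp (-u ^ 2)) := by
    simpa using integrable_exp_neg_mul_sq (b := 1) one_pos
  have hgv : ∫ u : ℝ, exp (-u ^ 2) = √π := by
    simpa using integral_gaussian 1
  have h1 := integral_image_eq_integral_abs_deriv_smul measurableSet_Ioi (aux_deriv b)
    (aux_inj b hb) (fun u => exp (-u ^ 2))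
  have h2 := (integrableOn_image_iff_integrableOn_abs_deriv_smul measurableSet_Ioi (aux_deriv b)
    (aux_inj b hb) (fun u => exp (-u ^ 2))).1 (by rw [aux_img b hb]; exact hgi.integrableOn)
  rw [aux_img b hb, setIntegral_univ, hgv] at h1
  have hG : IntegrableOn (fun s : ℝ => exp (-(s - b / s) ^ 2)) (Set.Ioi 0) := by
    refine Integrable.mono' h2 (by fun_prop) ?_
    refine (ae_restrict_iff' measurableSet_Ioi).2 (Filter.Eventually.of_forall fun s hs => ?_)
    have hs' : 0 < s := hs
    have h3 : 0 < b / s ^ 2 := by positivity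
    rw [Real.norm_eq_abs, abs_of_pos (exp_pos _), abs_of_pos (by positivity), smul_eq_mul]
    nlinarith [exp_pos (-(s - b / s) ^ 2)]
  have hH : IntegrableOn (fun s : ℝ => b / s ^ 2 * exp (-(s - b / s) ^ 2)) (Set.Ioi 0) := by
    refine (h2.sub hG).congr_fun (fun s hs => ?_) measurableSet_Ioi
    have hs' : 0 < s := hs
    simp only [Pi.sub_apply, smul_eq_mul]
    rw [abs_of_pos (by positivity)]
    ring
  have h4 : √π = ∫ s in Set.Ioi (0:ℝ),
      (exp (-(s - b / s) ^ 2) + b / s ^ 2 * exp (-(s - b / s) ^ 2)) := by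
    rw [h1]
    refine setIntegral_congr_fun measurableSet_Ioi fun s hs => ?_
    have hs' : 0 < s := hs
    simp only [smul_eq_mul]
    rw [abs_of_pos (by positivity)]
    ring
  rw [integral_add hG hH, ← aux_swap b hb] at h4
  linarith

/-- For `p > 0` and `x > 0`,
`e^{-√p x} = ∫_0^∞ e^{-p η x²} · (1/(2√(π η³))) e^{-1/(4η)} dη`. -/
theorem exp_sqrt_levy_repr (p x : ℝ) (hp : 0 < p) (hx : 0 < x) :
    Real.exp (-Real.sqrt p * x) =
      ∫ η in Set.Ioi (0:ℝ),
        Real.exp (-p * η * x ^ 2) *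
          (1 / (2 * Real.sqrt (π * η ^ 3)) * Real.exp (-1 / (4 * η))) := by
  have hq : 0 < √p := Real.sqrt_pos.2 hp
  have hqq : √p ^ 2 = p := Real.sq_sqrt hp.le
  have hpi : 0 < √π := Real.sqrt_pos.2 pi_pos
  have himg : (fun s : ℝ => 1 / (4 * s ^ 2)) '' Set.Ioi 0 = Set.Ioi 0 := by
    ext u
    simp only [Set.mem_image, Set.mem_Ioi]
    constructor
    · rintro ⟨s, hs, rfl⟩; positivity
    · intro hu
      have hsu : 0 < √u := Real.sqrt_pos.2 hu
      refine ⟨1 / (2 * √u), by positivity, ?_⟩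
      have : √u ^ 2 = u := Real.sq_sqrt hu.le
      rw [div_pow, mul_pow, this]
      field_simp
      norm_num
  have hinj : Set.InjOn (fun s : ℝ => 1 / (4 * s ^ 2)) (Set.Ioi 0) := by
    intro s hs t ht h
    have hs' : 0 < s := hs
    have ht' : 0 < t := ht
    simp only at h
    field_simp at h
    nlinarith
  have hd : ∀ s ∈ Set.Ioi (0:ℝ),
      HasDerivWithinAt (fun s : ℝ => 1 / (4 * s ^ 2)) (-(1 / (2 * s ^ 3))) (Set.Ioi 0) s := by
    intro s hs
    have hs' : s ≠ 0 := (Set.mem_Ioi.mp hs).ne'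
    have := ((hasDerivAt_const s (1:ℝ)).div ((hasDerivAt_pow 2 s).const_mul 4)
      (by positivity)).hasDerivWithinAt (s := Set.Ioi 0)
    convert! this using 1
    field_simp
    norm_num
    ring
  have key := integral_image_eq_integral_abs_deriv_smul measurableSet_Ioi hd hinj
    (fun η => Real.exp (-p * η * x ^ 2) *
          (1 / (2 * Real.sqrt (π * η ^ 3)) * Real.exp (-1 / (4 * η))))
  rw [himg] at key
  rw [key]
  have hb : 0 < √p * x / 2 := by positivity
  have : ∀ s ∈ Set.Ioi (0:ℝ), |(-(1 / (2 * s ^ 3)))| •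
      (Real.exp (-p * (1 / (4 * s ^ 2)) * x ^ 2) *
          (1 / (2 * Real.sqrt (π * (1 / (4 * s ^ 2)) ^ 3)) *
            Real.exp (-1 / (4 * (1 / (4 * s ^ 2))))))
      = (2 / √π * exp (-√p * x)) * exp (-(s - (√p * x / 2) / s) ^ 2) := by
    intro s hs
    have hs' : 0 < s := hs
    have e1 : √(π * (1 / (4 * s ^ 2)) ^ 3) = √π * (1 / (8 * s ^ 3)) := by
      rw [Real.sqrt_mul pi_pos.le]
      congr 1
      rw [Real.sqrt_eq_iff_mul_self_eq (by positivity) (by positivity)]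
      field_simp
      norm_num
    have e2 : exp (-√p * x) * exp (-(s - (√p * x / 2) / s) ^ 2)
        = Real.exp (-p * (1 / (4 * s ^ 2)) * x ^ 2) * Real.exp (-1 / (4 * (1 / (4 * s ^ 2)))) := by
      rw [← exp_add, ← exp_add]
      congr 1
      nth_rewrite 3 [← hqq]
      field_simp
      ring
    rw [mul_assoc (2 / √π), e2, e1, abs_neg, abs_of_pos (by positivity), smul_eq_mul]
    generalize Real.exp (-p * (1 / (4 * s ^ 2)) * x ^ 2) = A
    generalize Real.exp (-1 / (4 * (1 / (4 * s ^ 2)))) = B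
    field_simp
    ring
  rw [setIntegral_congr_fun measurableSet_Ioi this, integral_const_mul, aux_main _ hb]
  field_simp
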